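/- There exists a constant C > 0, depending only on d, such that for every ε ∈ (0,1), every n ≥ 2 and every symmetric ψ ∈ ΓL²_n with ‖(−L₀)^{1/2}ψ‖ < ∞, the bound ‖(−L₀)^{−1/2} A⁻_ε ψ‖ ≤ C √n ‖(−L₀)^{1/2} ψ‖ holds (this is the '−' case of the graded sector bound ‖(−L₀)^{−1/2} A^ε_σ ψ‖ ≤ C ‖√N (−L₀)^{1/2} ψ‖, since the number operator N acts on ΓL²_n as multiplication by n). -/

import Mathlib

open scoped BigOperators
open scoped Classical

noncomputable section

namespace SBE

/-- Lattice points of `ℤ^d`. -/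
abbrev ZLat (d : ℕ) := Fin d → ℤ

/-- Kernels of the `n`-th chaos: functions on `n`-tuples of lattice points. -/
abbrev Chaos (d n : ℕ) := (Fin n → ZLat d) → ℂ

/-- Squared Euclidean norm of a lattice point. -/
def nsq {d : ℕ} (k : ZLat d) : ℝ := ∑ i, ((k i : ℝ))^2

/-- Euclidean norm of a lattice point. -/
def eN {d : ℕ} (k : ZLat d) : ℝ := Real.sqrt (nsq k)

/-- Supremum norm of a lattice point. -/
def sN {d : ℕ} (k : ZLat d) : ℝ := ((Finset.univ.sup fun i => (k i).natAbs : ℕ) : ℝ)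

/-- The norm used in the Fourier cutoff: Euclidean if `d = 2`, supremum otherwise. -/
def cutNorm (d : ℕ) (k : ZLat d) : ℝ := if d = 2 then eN k else sN k

/-- `w · k`. -/
def dotw {d : ℕ} (w : Fin d → ℝ) (k : ZLat d) : ℝ := ∑ i, w i * (k i : ℝ)

/-- `|k_{1:n}|² = Σ_i |k_i|²`. -/
def wSq {d n : ℕ} (k : Fin n → ZLat d) : ℝ := ∑ a, nsq (k a)

/-- The coupling constant `λ_ε`. -/
def lam (d : ℕ) (ε : ℝ) : ℝ :=
  if d = 2 then (Real.sqrt (Real.log (1 / ε^2)))⁻¹ else ε ^ ((d:ℝ)/2 - 1)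

/-- The Fourier cutoff indicator `J^ε_{ℓ,m}`. -/
def Jind (d : ℕ) (ε : ℝ) (l m : ZLat d) : ℝ :=
  if 0 < ε * cutNorm d l ∧ ε * cutNorm d l ≤ 1 ∧
     0 < ε * cutNorm d m ∧ ε * cutNorm d m ≤ 1 ∧
     0 < ε * cutNorm d (l + m) ∧ ε * cutNorm d (l + m) ≤ 1 then 1 else 0

/-- Symmetry of a kernel under permutation of its arguments. -/
def Symm {d n : ℕ} (f : Chaos d n) : Prop :=
  ∀ (σ : Equiv.Perm (Fin n)) (k : Fin n → ZLat d), f (k ∘ σ) = f k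

/-- A kernel vanishes whenever one of its arguments is the zero frequency
(i.e. it is really a function on `(ℤ^d_0)^n`). -/
def SuppOk {d n : ℕ} (f : Chaos d n) : Prop :=
  ∀ k : Fin n → ZLat d, (∃ a, k a = 0) → f k = 0

/-- Summand of `‖(-L₀)^s f‖²`. -/
def sobTerm {d n : ℕ} (s : ℝ) (f : Chaos d n) (k : Fin n → ZLat d) : ℝ :=
  (wSq k / 2) ^ (2*s) * ‖f k‖^2

/-- `‖(-L₀)^s f‖² = n! Σ_k (|k_{1:n}|²/2)^{2s} |f(k)|²`. -/
def sobSq {d n : ℕ} (s : ℝ) (f : Chaos d n) : ℝ := (n.factorial : ℝ) * ∑' k, sobTerm s f k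

/-- Remove the entries `i < j` from an `(n+2)`-tuple (order preservingly). -/
def remove2 {X : Type*} {n : ℕ} (k : Fin (n+2) → X) (i j : Fin (n+2)) (h : i < j) :
    Fin n → X :=
  fun a => k (j.succAbove ((Fin.castLT i
    (Nat.lt_of_lt_of_le (Fin.lt_def.mp h) (Nat.lt_succ_iff.mp j.isLt))).succAbove a))

/-- The operator `A⁺_ε : ΓL²_{n+1} → ΓL²_{n+2}`. -/
def Aplus (d : ℕ) (w : Fin d → ℝ) (ε : ℝ) {n : ℕ} (f : Chaos d (n+1)) : Chaos d (n+2) :=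
  fun k => -(2 * Complex.I / (((2*Real.pi) ^ ((d:ℝ)/2) : ℝ) : ℂ)) *
      ((lam d ε / ((n:ℝ)+2) : ℝ) : ℂ) *
    ∑ i : Fin (n+2), ∑ j : Fin (n+2),
      if h : i < j then
        ((dotw w (k i + k j) : ℝ) : ℂ) * ((Jind d ε (k i) (k j) : ℝ) : ℂ) *
          f (Fin.cons (k i + k j) (remove2 k i j h))
      else 0

/-- The operator `A⁻_ε : ΓL²_{n+2} → ΓL²_{n+1}`. -/
def Aminus (d : ℕ) (w : Fin d → ℝ) (ε : ℝ) {n : ℕ} (f : Chaos d (n+2)) : Chaos d (n+1) :=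
  fun k => (2 * Complex.I / (((2*Real.pi) ^ ((d:ℝ)/2) : ℝ) : ℂ)) *
      ((((n:ℝ)+2) * lam d ε : ℝ) : ℂ) *
    ∑ j : Fin (n+1), ((dotw w (k j) : ℝ) : ℂ) *
      ∑' l : ZLat d, ((Jind d ε l (k j - l) : ℝ) : ℂ) *
        f (Fin.cons l (Fin.cons (k j - l) (fun a => k (j.succAbove a))))

def boxF (d R : ℕ) : Finset (ZLat d) :=
  Fintype.piFinset (fun _ => Finset.Icc (-(R:ℤ)) (R:ℤ))

lemma mem_boxF {d R : ℕ} {l : ZLat d} : l ∈ boxF d R ↔ ∀ i, |l i| ≤ (R:ℤ) := by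
  simp [boxF, Fintype.mem_piFinset, abs_le]

lemma card_boxF (d R : ℕ) : (boxF d R).card = (2*R+1)^d := by
  rw [boxF, Fintype.card_piFinset_const, Int.card_Icc]
  congr 1
  omega

lemma nsq_nonneg {d : ℕ} (l : ZLat d) : 0 ≤ nsq l :=
  Finset.sum_nonneg fun _ _ => sq_nonneg _

lemma sq_le_nsq {d : ℕ} (l : ZLat d) (i : Fin d) : (l i : ℝ)^2 ≤ nsq l :=
  Finset.single_le_sum (f := fun i => (l i : ℝ)^2) (fun _ _ => sq_nonneg _) (Finset.mem_univ i)

lemma abs_le_cutNorm {d : ℕ} (l : ZLat d) (i : Fin d) : |(l i : ℝ)| ≤ cutNorm d l := by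
  unfold cutNorm
  split_ifs with h
  · exact Real.abs_le_sqrt (sq_le_nsq l i)
  · unfold sN
    have h1 : (l i).natAbs ≤ (Finset.univ.sup fun i => (l i).natAbs : ℕ) :=
      Finset.le_sup (f := fun i => (l i).natAbs) (Finset.mem_univ i)
    have h2 : |(l i : ℝ)| = ((l i).natAbs : ℝ) := by
      rw [Nat.cast_natAbs, Int.cast_abs]
    rw [h2]
    exact_mod_cast h1

lemma nsq_pos {d : ℕ} {l : ZLat d} (h : l ≠ 0) : 0 < nsq l := by
  obtain ⟨i, hi⟩ := Function.ne_iff.mp h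
  refine lt_of_lt_of_le ?_ (sq_le_nsq l i)
  have : (l i : ℝ) ≠ 0 := by exact_mod_cast hi
  positivity

lemma cutNorm_zero (d : ℕ) : cutNorm d (0 : ZLat d) = 0 := by
  unfold cutNorm eN sN nsq
  split_ifs
  · simp
  · simp only [Pi.zero_apply, Int.natAbs_zero, Nat.cast_eq_zero]
    exact Nat.le_zero.mp (Finset.sup_le (by simp))

lemma boxF_mono (d R : ℕ) : boxF d R ⊆ boxF d (R+1) := by
  intro l hl
  rw [mem_boxF] at *
  intro i
  have := hl i
  push_cast
  omega

lemma shell_card (d R : ℕ) :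
    (((boxF d (R+1) \ boxF d R).card : ℕ) : ℝ) ≤ 2 * d * 3^(d-1) * ((R:ℝ)+1)^(d-1) := by
  rw [Finset.card_sdiff_of_subset (boxF_mono d R), Nat.cast_sub (Finset.card_le_card (boxF_mono d R)),
    card_boxF, card_boxF]
  push_cast
  have h := abs_pow_sub_pow_le (2*((R:ℝ)+1)+1) (2*(R:ℝ)+1) d
  have h1 : |(2*((R:ℝ)+1)+1) - (2*(R:ℝ)+1)| = 2 := by
    rw [show (2*((R:ℝ)+1)+1) - (2*(R:ℝ)+1) = 2 by ring]; norm_num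
  have hR : (0:ℝ) ≤ R := Nat.cast_nonneg R
  have h2 : max |2*((R:ℝ)+1)+1| |2*(R:ℝ)+1| ≤ 3 * ((R:ℝ)+1) := by
    rw [abs_of_nonneg (by positivity), abs_of_nonneg (by positivity)]
    apply max_le <;> linarith
  rw [h1] at h
  refine (le_abs_self _).trans (h.trans ?_)
  rw [mul_assoc (2 * (d:ℝ)), ← mul_pow]
  have : (0:ℝ) ≤ max |2*((R:ℝ)+1)+1| |2*(R:ℝ)+1| := le_max_of_le_left (abs_nonneg _)
  gcongr

lemma box_sum (d R : ℕ) :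
    ∑ l ∈ boxF d R, (nsq l)⁻¹ ≤
      2 * d * 3^(d-1) * ∑ r ∈ Finset.range R, ((r:ℝ)+1)^(d-1) / ((r:ℝ)+1)^2 := by
  induction R with
  | zero =>
    rw [Finset.sum_range_zero, mul_zero]
    apply Finset.sum_nonpos
    intro l hl
    have : l = 0 := by
      funext i
      have := mem_boxF.mp hl i
      simpa using this
    subst this
    simp [nsq]
  | succ R ih =>
    rw [← Finset.sum_sdiff (boxF_mono d R), Finset.sum_range_succ, mul_add, add_comm]
    refine add_le_add ih ?_
    have : ∀ l ∈ boxF d (R+1) \ boxF d R, (nsq l)⁻¹ ≤ (((R:ℝ)+1)^2)⁻¹ := by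
      intro l hl
      rw [Finset.mem_sdiff, mem_boxF, mem_boxF] at hl
      obtain ⟨-, h⟩ := hl
      push Not at h
      obtain ⟨i, hi⟩ := h
      have h1 : ((R:ℝ)+1) ≤ |(l i : ℝ)| := by
        have : (R:ℤ)+1 ≤ |l i| := hi
        exact_mod_cast this
      have h2 : ((R:ℝ)+1)^2 ≤ nsq l := by
        refine le_trans ?_ (sq_le_nsq l i)
        rw [← sq_abs (l i : ℝ)]
        gcongr
      gcongr
    refine (Finset.sum_le_card_nsmul _ _ _ this).trans ?_
    rw [nsmul_eq_mul, div_eq_mul_inv, ← mul_assoc]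
    gcongr
    exact shell_card d R

lemma Jind_nonneg (d : ℕ) (ε : ℝ) (l m : ZLat d) : 0 ≤ Jind d ε l m := by
  unfold Jind; split_ifs <;> norm_num

lemma Jind_le_one (d : ℕ) (ε : ℝ) (l m : ZLat d) : Jind d ε l m ≤ 1 := by
  unfold Jind; split_ifs <;> norm_num

lemma Jind_ne {d : ℕ} {ε : ℝ} (hε : 0 < ε) {l m : ZLat d} (h : Jind d ε l m ≠ 0) :
    l ≠ 0 ∧ l ∈ boxF d ⌊1/ε⌋₊ := by
  have hc : 0 < ε * cutNorm d l ∧ ε * cutNorm d l ≤ 1 := by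
    unfold Jind at h
    split_ifs at h with hh
    · exact ⟨hh.1, hh.2.1⟩
    · exact absurd rfl h
  constructor
  · rintro rfl
    rw [cutNorm_zero] at hc
    simp at hc
  · rw [mem_boxF]
    intro i
    have h1 : |(l i : ℝ)| ≤ 1/ε := by
      refine (abs_le_cutNorm l i).trans ?_
      rw [le_div_iff₀ hε]; linarith [hc.2]
    have h2 : (((l i).natAbs : ℕ) : ℝ) ≤ 1/ε := by
      rw [Nat.cast_natAbs, Int.cast_abs]; exact h1
    have := Nat.le_floor h2
    rw [Int.abs_eq_natAbs]
    exact_mod_cast this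

lemma eps_small {ε : ℝ} (hε : 0 < ε) {l m : ZLat 2} (h : Jind 2 ε l m ≠ 0) : ε^2 ≤ 1/2 := by
  have key : ∀ k : ZLat 2, 0 < ε * cutNorm 2 k → ε * cutNorm 2 k ≤ 1 → 1/2 < ε^2 →
      k 0 ^ 2 + k 1 ^ 2 = 1 := by
    intro k h0 h1 h2
    have e : cutNorm 2 k = Real.sqrt (nsq k) := by simp [cutNorm, eN]
    have hs : Real.sqrt (nsq k) ^ 2 = nsq k := Real.sq_sqrt (nsq_nonneg k)
    rw [e] at h0 h1
    have hp : 0 < Real.sqrt (nsq k) := by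
      by_contra hh
      have := mul_nonpos_of_nonneg_of_nonpos hε.le (not_lt.mp hh)
      linarith
    have h3 : ε^2 * nsq k ≤ 1 := by
      rw [← hs, ← mul_pow]
      exact pow_le_one₀ h0.le h1
    have h4 : 0 < nsq k := by rw [← hs]; positivity
    have h5 : nsq k < 2 := by nlinarith
    have h6 : nsq k = ((k 0 ^ 2 + k 1 ^ 2 : ℤ) : ℝ) := by
      simp [nsq, Fin.sum_univ_two]
    rw [h6] at h4 h5
    have h7 : 0 < k 0 ^ 2 + k 1 ^ 2 := by exact_mod_cast h4
    have h8 : k 0 ^ 2 + k 1 ^ 2 < 2 := by exact_mod_cast h5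
    omega
  by_contra hh
  push Not at hh
  unfold Jind at h
  split_ifs at h with hc
  · obtain ⟨a1, a2, b1, b2, c1, c2⟩ := hc
    have A := key l a1 a2 hh
    have B := key m b1 b2 hh
    have D := key (l+m) c1 c2 hh
    simp only [Pi.add_apply] at D
    have : 2 * (l 0 * m 0 + l 1 * m 1) = -1 := by linear_combination D - A - B
    omega
  · exact h rfl

lemma lam_sum_bound (d : ℕ) (hd : 2 ≤ d) : ∃ C0 : ℝ, 0 ≤ C0 ∧ ∀ ε : ℝ, 0 < ε → ε < 1 →
    (d = 2 → ε^2 ≤ 1/2) → (lam d ε)^2 * ∑ l ∈ boxF d ⌊1/ε⌋₊, (nsq l)⁻¹ ≤ C0 := by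
  have hK : (0:ℝ) ≤ 2 * d * 3^(d-1) := by positivity
  by_cases h2 : d = 2
  · subst h2
    refine ⟨2 * (2:ℕ) * 3^(2-1) * (1 / Real.log 2 + 1), ?_, ?_⟩
    · have := Real.log_pos (by norm_num : (1:ℝ) < 2)
      positivity
    · intro ε h0 h1 h3
      have h3 := h3 rfl
      have hl2 := Real.log_pos (by norm_num : (1:ℝ) < 2)
      have hL : Real.log 2 ≤ Real.log (1/ε^2) := by
        apply Real.log_le_log (by norm_num)
        rw [le_div_iff₀ (by positivity)]; linarith
      have hlam : (lam 2 ε)^2 = (Real.log (1/ε^2))⁻¹ := by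
        simp only [lam, if_true, inv_pow]
        rw [Real.sq_sqrt (by linarith)]
      have hsum : ∑ r ∈ Finset.range ⌊1/ε⌋₊, ((r:ℝ)+1)^(2-1) / ((r:ℝ)+1)^2 ≤
          1 + Real.log (1/ε^2) := by
        have e : ∑ r ∈ Finset.range ⌊1/ε⌋₊, ((r:ℝ)+1)^(2-1) / ((r:ℝ)+1)^2
            = ((harmonic ⌊1/ε⌋₊ : ℚ) : ℝ) := by
          rw [harmonic]; push_cast
          apply Finset.sum_congr rfl
          intro r _
          have : (r:ℝ)+1 ≠ 0 := by positivity
          field_simp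
        rw [e]
        refine (harmonic_le_one_add_log _).trans ?_
        gcongr
        · have : 1 ≤ 1/ε := by rw [le_div_iff₀ h0]; linarith
          exact_mod_cast Nat.floor_pos.mpr this
        · refine (Nat.floor_le (by positivity)).trans ?_
          gcongr
          nlinarith
      have hb := (box_sum 2 ⌊1/ε⌋₊).trans (mul_le_mul_of_nonneg_left hsum hK)
      rw [hlam]
      have hLp : 0 < Real.log (1/ε^2) := by linarith
      refine (mul_le_mul_of_nonneg_left hb (by positivity)).trans ?_
      have : (Real.log (1/ε^2))⁻¹ * (1 + Real.log (1/ε^2)) ≤ 1 / Real.log 2 + 1 := by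
        rw [mul_add, inv_mul_cancel₀ hLp.ne', mul_one, one_div (Real.log 2)]
        gcongr
      calc _ = (2 * (2:ℕ) * 3^(2-1) : ℝ) * ((Real.log (1/ε^2))⁻¹ * (1 + Real.log (1/ε^2))) := by ring
        _ ≤ _ := by gcongr
  · obtain ⟨e, rfl⟩ : ∃ e, d = e + 3 := ⟨d - 3, by omega⟩
    refine ⟨_, hK, ?_⟩
    intro ε h0 h1 _
    have hlam : (lam (e+3) ε)^2 = ε^(e+1) := by
      rw [lam, if_neg h2, ← Real.rpow_natCast, ← Real.rpow_mul h0.le, ← Real.rpow_natCast]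
      congr 1
      push_cast; ring
    have hsum : ∑ r ∈ Finset.range ⌊1/ε⌋₊, ((r:ℝ)+1)^(e+3-1) / ((r:ℝ)+1)^2 ≤ (1/ε)^(e+1) := by
      have hfl : (⌊1/ε⌋₊ : ℝ) ≤ 1/ε := Nat.floor_le (by positivity)
      have : ∀ r ∈ Finset.range ⌊1/ε⌋₊, ((r:ℝ)+1)^(e+3-1) / ((r:ℝ)+1)^2 ≤ (1/ε)^e := by
        intro r hr
        have hr' : ((r+1 : ℕ):ℝ) ≤ ⌊1/ε⌋₊ := by
          exact_mod_cast Finset.mem_range.mp hr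
        push_cast at hr'
        have : ((r:ℝ)+1)^(e+3-1) / ((r:ℝ)+1)^2 = ((r:ℝ)+1)^e := by
          rw [show e+3-1 = e+2 by omega, pow_add]
          have : (r:ℝ)+1 ≠ 0 := by positivity
          field_simp
        rw [this]
        gcongr
        linarith
      refine (Finset.sum_le_card_nsmul _ _ _ this).trans ?_
      rw [Finset.card_range, nsmul_eq_mul, pow_succ, mul_comm]
      gcongr
    have hb := (box_sum (e+3) ⌊1/ε⌋₊).trans (mul_le_mul_of_nonneg_left hsum hK)
    rw [hlam]
    refine (mul_le_mul_of_nonneg_left hb (by positivity)).trans (le_of_eq ?_)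
    rw [one_div, inv_pow]
    field_simp

lemma pointwise (d : ℕ) (hd : 2 ≤ d) : ∃ C0 : ℝ, 0 ≤ C0 ∧ ∀ ε : ℝ, 0 < ε → ε < 1 →
    ∀ (p : ZLat d) (f : ZLat d → ℂ), Summable (fun l => nsq l * ‖f l‖^2) →
    (lam d ε)^2 * ‖∑' l : ZLat d, ((Jind d ε l (p - l) : ℝ) : ℂ) * f l‖^2 ≤
      C0 * ∑' l, nsq l * ‖f l‖^2 := by
  obtain ⟨C0, hC0, H⟩ := lam_sum_bound d hd
  refine ⟨C0, hC0, ?_⟩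
  intro ε h0 h1 p f hf
  have hT : 0 ≤ ∑' l, nsq l * ‖f l‖^2 :=
    tsum_nonneg fun l => mul_nonneg (nsq_nonneg l) (sq_nonneg _)
  by_cases hJ : ∃ l, Jind d ε l (p - l) ≠ 0
  · obtain ⟨l0, hl0⟩ := hJ
    have hM := H ε h0 h1 (by rintro rfl; exact eps_small h0 hl0)
    set S := boxF d ⌊1/ε⌋₊ with hS
    have e1 : ∑' l : ZLat d, ((Jind d ε l (p - l) : ℝ) : ℂ) * f l =
        ∑ l ∈ S, ((Jind d ε l (p - l) : ℝ) : ℂ) * f l := by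
      apply tsum_eq_sum
      intro l hl
      have : Jind d ε l (p - l) = 0 := by
        by_contra hne
        exact hl (Jind_ne h0 hne).2
      simp [this]
    have e2 : ‖∑' l : ZLat d, ((Jind d ε l (p - l) : ℝ) : ℂ) * f l‖^2 ≤
        (∑ l ∈ S, (nsq l)⁻¹) * ∑' l, nsq l * ‖f l‖^2 := by
      rw [e1]
      calc _ ≤ (∑ l ∈ S, ‖((Jind d ε l (p - l) : ℝ) : ℂ) * f l‖)^2 := by
            gcongr; exact norm_sum_le _ _
        _ ≤ (∑ l ∈ S, (nsq l)⁻¹) * ∑ l ∈ S, nsq l * ‖f l‖^2 := by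
            apply Finset.sum_sq_le_sum_mul_sum_of_sq_le_mul
            · intro l _; exact inv_nonneg.mpr (nsq_nonneg l)
            · intro l _; exact mul_nonneg (nsq_nonneg l) (sq_nonneg _)
            · intro l _
              by_cases hz : Jind d ε l (p - l) = 0
              · rw [hz]
                have := nsq_nonneg l
                simp only [Complex.ofReal_zero, zero_mul, norm_zero]
                rw [zero_pow two_ne_zero]
                positivity
              · have hp := nsq_pos (Jind_ne h0 hz).1
                rw [inv_mul_cancel_left₀ hp.ne', norm_mul, Complex.norm_real, Real.norm_eq_abs,
                  abs_of_nonneg (Jind_nonneg _ _ _ _)]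
                have := Jind_le_one d ε l (p - l)
                have h3 := Jind_nonneg d ε l (p - l)
                gcongr
                exact mul_le_of_le_one_left (norm_nonneg _) this
        _ ≤ _ := by
            gcongr
            · exact Finset.sum_nonneg fun l _ => inv_nonneg.mpr (nsq_nonneg l)
            · exact hf.sum_le_tsum _ fun l _ => mul_nonneg (nsq_nonneg l) (sq_nonneg _)
    calc _ ≤ (lam d ε)^2 * ((∑ l ∈ S, (nsq l)⁻¹) * ∑' l, nsq l * ‖f l‖^2) := by gcongr
      _ = ((lam d ε)^2 * ∑ l ∈ S, (nsq l)⁻¹) * ∑' l, nsq l * ‖f l‖^2 := by ring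
      _ ≤ _ := by gcongr
  · push Not at hJ
    simp only [hJ, Complex.ofReal_zero, zero_mul, tsum_zero, norm_zero]
    rw [zero_pow two_ne_zero, mul_zero]
    positivity

def Phi {d n : ℕ} (j : Fin (n+1)) (q : (Fin (n+1) → ZLat d) × ZLat d) : Fin (n+2) → ZLat d :=
  Fin.cons q.2 (Fin.cons (q.1 j - q.2) (fun a => q.1 (j.succAbove a)))

lemma Phi_inj {d n : ℕ} (j : Fin (n+1)) : Function.Injective (Phi (d := d) j) := by
  rintro ⟨k, l⟩ ⟨k', l'⟩ h
  unfold Phi at h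
  rw [Fin.cons_inj, Fin.cons_inj] at h
  obtain ⟨h1, h2, h3⟩ := h
  dsimp only at h1 h2 h3
  subst h1
  have h2 : k j = k' j := sub_left_injective h2
  congr 1
  funext a
  rcases Fin.eq_self_or_eq_succAbove j a with rfl | ⟨b, rfl⟩
  · exact h2
  · exact congrFun h3 b

lemma Phi_comp {d n : ℕ} (j : Fin (n+1)) (ψ : Chaos d (n+2)) :
    (fun q : (Fin (n+1) → ZLat d) × ZLat d => nsq q.2 * ‖ψ (Phi j q)‖^2) =
      (fun K : Fin (n+2) → ZLat d => nsq (K 0) * ‖ψ K‖^2) ∘ (Phi j) := by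
  funext q
  have : Phi j q 0 = q.2 := by unfold Phi; rw [Fin.cons_zero]
  rw [Function.comp_apply, this]

lemma wSq_nonneg {d n : ℕ} (k : Fin n → ZLat d) : 0 ≤ wSq k :=
  Finset.sum_nonneg fun _ _ => nsq_nonneg _

lemma sob_half {d n : ℕ} (f : Chaos d n) (k) : sobTerm (1/2 : ℝ) f k = wSq k / 2 * ‖f k‖^2 := by
  rw [sobTerm, show (2*(1/2):ℝ) = 1 by norm_num, Real.rpow_one]

lemma sob_neg_half {d n : ℕ} (f : Chaos d n) (k) :
    sobTerm (-(1/2) : ℝ) f k = (wSq k / 2)⁻¹ * ‖f k‖^2 := by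
  rw [sobTerm, show (2*(-(1/2)):ℝ) = -1 by norm_num, Real.rpow_neg_one]

lemma T_summable {d n : ℕ} (ψ : Chaos d n) (h : Summable (sobTerm (1/2 : ℝ) ψ)) (a : Fin n) :
    Summable (fun K : Fin n → ZLat d => nsq (K a) * ‖ψ K‖^2) := by
  refine Summable.of_nonneg_of_le (fun K => mul_nonneg (nsq_nonneg _) (sq_nonneg _)) ?_
    (h.mul_left 2)
  intro K
  rw [sob_half]
  have : nsq (K a) ≤ wSq K :=
    Finset.single_le_sum (f := fun a => nsq (K a)) (fun _ _ => nsq_nonneg _) (Finset.mem_univ a)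
  have := mul_le_mul_of_nonneg_right this (sq_nonneg ‖ψ K‖)
  linarith

lemma T_sum {d n : ℕ} (ψ : Chaos d (n+2)) (hs : Symm ψ) (h : Summable (sobTerm (1/2 : ℝ) ψ)) :
    ((n:ℝ)+2) * ∑' K : Fin (n+2) → ZLat d, nsq (K 0) * ‖ψ K‖^2 = 2 * ∑' K, sobTerm (1/2 : ℝ) ψ K := by
  have h1 : ∀ a : Fin (n+2), ∑' K : Fin (n+2) → ZLat d, nsq (K a) * ‖ψ K‖^2 =
      ∑' K : Fin (n+2) → ZLat d, nsq (K 0) * ‖ψ K‖^2 := by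
    intro a
    let e : (Fin (n+2) → ZLat d) ≃ (Fin (n+2) → ZLat d) :=
      Equiv.arrowCongr (Equiv.swap 0 a) (Equiv.refl _)
    have he : ∀ K, e K = K ∘ (Equiv.swap 0 a) := by
      intro K; funext b; simp [e, Equiv.arrowCongr]
    rw [← e.tsum_eq]
    apply tsum_congr
    intro K
    rw [he, hs]
    simp
  have h2 : ∑ a : Fin (n+2), ∑' K : Fin (n+2) → ZLat d, nsq (K a) * ‖ψ K‖^2
      = ∑' K, 2 * sobTerm (1/2 : ℝ) ψ K := by
    rw [← Summable.tsum_finsetSum (fun a _ => T_summable ψ h a)]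
    apply tsum_congr
    intro K
    rw [sob_half, ← Finset.sum_mul]
    unfold wSq
    ring
  rw [tsum_mul_left] at h2
  rw [← h2, Finset.sum_congr rfl (fun a _ => h1 a), Finset.sum_const, Finset.card_univ,
    Fintype.card_fin, nsmul_eq_mul]
  push_cast; ring

lemma dotw_sq {d : ℕ} (w : Fin d → ℝ) (k : ZLat d) :
    (dotw w k)^2 ≤ (∑ i, w i ^2) * nsq k :=
  Finset.sum_mul_sq_le_sq_mul_sq _ _ _

lemma cs_j {d n : ℕ} (w : Fin d → ℝ) (k : Fin (n+1) → ZLat d) (G : Fin (n+1) → ℂ) :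
    (wSq k / 2)⁻¹ * ‖∑ j, ((dotw w (k j) : ℝ) : ℂ) * G j‖^2 ≤
      2 * (∑ i, w i ^2) * ∑ j, ‖G j‖^2 := by
  have hW : 0 ≤ ∑ i, w i ^2 := Finset.sum_nonneg fun _ _ => sq_nonneg _
  have h1 : ‖∑ j, ((dotw w (k j) : ℝ) : ℂ) * G j‖^2 ≤
      ((∑ i, w i ^2) * wSq k) * ∑ j, ‖G j‖^2 := by
    calc _ ≤ (∑ j, ‖((dotw w (k j) : ℝ) : ℂ) * G j‖)^2 := by
          gcongr; exact norm_sum_le _ _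
      _ ≤ (∑ j, (∑ i, w i ^2) * nsq (k j)) * ∑ j, ‖G j‖^2 := by
          apply Finset.sum_sq_le_sum_mul_sum_of_sq_le_mul
          · intro j _; exact mul_nonneg hW (nsq_nonneg _)
          · intro j _; positivity
          · intro j _
            rw [norm_mul, mul_pow, Complex.norm_real, Real.norm_eq_abs, sq_abs]
            gcongr
            exact dotw_sq w _
      _ = _ := by rw [← Finset.mul_sum]; rfl
  have h0 := wSq_nonneg k
  have hG : 0 ≤ ∑ j, ‖G j‖^2 := Finset.sum_nonneg fun _ _ => sq_nonneg _
  rcases h0.eq_or_lt with h | h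
  · rw [← h]
    simp only [zero_div, inv_zero, zero_mul]
    positivity
  · refine (mul_le_mul_of_nonneg_left h1 (by positivity)).trans (le_of_eq ?_)
    field_simp

lemma Aminus_term (d : ℕ) (w : Fin d → ℝ) (C0 : ℝ)
    (ε : ℝ) (H : ∀ (p : ZLat d) (f : ZLat d → ℂ), Summable (fun l => nsq l * ‖f l‖^2) →
    (lam d ε)^2 * ‖∑' l : ZLat d, ((Jind d ε l (p - l) : ℝ) : ℂ) * f l‖^2 ≤
      C0 * ∑' l, nsq l * ‖f l‖^2) (n : ℕ) (ψ : Chaos d (n+2))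
    (hsum : ∀ j : Fin (n+1), Summable (fun q : (Fin (n+1) → ZLat d) × ZLat d =>
      nsq q.2 * ‖ψ (Phi j q)‖^2)) (k : Fin (n+1) → ZLat d) :
    sobTerm (-(1/2) : ℝ) (Aminus d w ε ψ) k ≤
      ‖(2 * Complex.I / (((2*Real.pi) ^ ((d:ℝ)/2) : ℝ) : ℂ))‖^2 * ((n:ℝ)+2)^2 *
        (2 * (∑ i, w i ^2)) * C0 * ∑ j, ∑' l, nsq l * ‖ψ (Phi j (k, l))‖^2 := by
  have hW : 0 ≤ ∑ i, w i ^2 := Finset.sum_nonneg fun _ _ => sq_nonneg _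
  rw [sob_neg_half]
  set c := (2 * Complex.I / (((2*Real.pi) ^ ((d:ℝ)/2) : ℝ) : ℂ)) with hc
  let G : Fin (n+1) → ℂ := fun j => ∑' l : ZLat d, ((Jind d ε l (k j - l) : ℝ) : ℂ) *
    ψ (Phi j (k, l))
  have e : Aminus d w ε ψ k = c * ((((n:ℝ)+2) * lam d ε : ℝ) : ℂ) *
      ∑ j, ((dotw w (k j) : ℝ) : ℂ) * G j := rfl
  have hG : ∀ j, (lam d ε)^2 * ‖G j‖^2 ≤ C0 * ∑' l, nsq l * ‖ψ (Phi j (k, l))‖^2 :=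
    fun j => H (k j) (fun l => ψ (Phi j (k, l))) ((hsum j).prod_factor k)
  have hcs := cs_j w k G
  rw [e, norm_mul, norm_mul, mul_pow, mul_pow, Complex.norm_real, Real.norm_eq_abs, sq_abs]
  calc _ = ‖c‖^2 * ((n:ℝ)+2)^2 * (lam d ε)^2 *
        ((wSq k / 2)⁻¹ * ‖∑ j, ((dotw w (k j) : ℝ) : ℂ) * G j‖^2) := by ring
    _ ≤ ‖c‖^2 * ((n:ℝ)+2)^2 * (lam d ε)^2 * (2 * (∑ i, w i ^2) * ∑ j, ‖G j‖^2) := by gcongr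
    _ = ‖c‖^2 * ((n:ℝ)+2)^2 * (2 * (∑ i, w i ^2)) * ∑ j, (lam d ε)^2 * ‖G j‖^2 := by
        rw [← Finset.mul_sum]; ring
    _ ≤ ‖c‖^2 * ((n:ℝ)+2)^2 * (2 * (∑ i, w i ^2)) *
          ∑ j, C0 * ∑' l, nsq l * ‖ψ (Phi j (k, l))‖^2 := by
        exact mul_le_mul_of_nonneg_left (Finset.sum_le_sum fun j _ => hG j) (by positivity)
    _ = _ := by rw [← Finset.mul_sum]; ring

/-- graded sector bound, `−` case.
For `d ≥ 2` and `w ∈ ℝ^d \ {0}` there is a constant `C > 0` (independent of `ε`, `n`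
and `ψ`) such that for every `ε ∈ (0,1)`, every `n ≥ 2` (here the chaos level is `n+2 ≥ 2`)
and every symmetric `ψ ∈ ΓL²_{n+2}` supported on `(ℤ^d_0)^{n+2}` with
`‖(−L₀)^{1/2}ψ‖ < ∞`, one has `‖(−L₀)^{−1/2} A⁻_ε ψ‖ ≤ C √(n+2) ‖(−L₀)^{1/2} ψ‖`. -/
theorem stmt1 (d : ℕ) (hd : 2 ≤ d) (w : Fin d → ℝ) (hw : w ≠ 0) :
    ∃ C : ℝ, 0 < C ∧
      ∀ ε : ℝ, 0 < ε → ε < 1 →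
      ∀ (n : ℕ) (ψ : Chaos d (n+2)),
        Symm ψ → SuppOk ψ → Summable (sobTerm (1/2 : ℝ) ψ) →
        Summable (sobTerm (-(1/2) : ℝ) (Aminus d w ε ψ)) ∧
        Real.sqrt (sobSq (-(1/2) : ℝ) (Aminus d w ε ψ)) ≤
          C * Real.sqrt ((n : ℝ) + 2) * Real.sqrt (sobSq (1/2 : ℝ) ψ) := by
  obtain ⟨C0, hC0, H⟩ := pointwise d hd
  have hW : 0 ≤ ∑ i, w i ^2 := Finset.sum_nonneg fun _ _ => sq_nonneg _
  set c := (2 * Complex.I / (((2*Real.pi) ^ ((d:ℝ)/2) : ℝ) : ℂ)) with hc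
  set B : ℝ := 4 * ‖c‖^2 * (∑ i, w i ^2) * C0 with hB
  have hB0 : 0 ≤ B := by positivity
  refine ⟨Real.sqrt B + 1, by positivity, ?_⟩
  intro ε h0 h1 n ψ hs _ hψ
  have hT := T_summable ψ hψ 0
  have hTs := T_sum ψ hs hψ
  set T := ∑' K : Fin (n+2) → ZLat d, nsq (K 0) * ‖ψ K‖^2 with hTdef
  set Q := ∑' K, sobTerm (1/2 : ℝ) ψ K with hQ
  have hsum : ∀ j : Fin (n+1), Summable (fun q : (Fin (n+1) → ZLat d) × ZLat d =>
      nsq q.2 * ‖ψ (Phi j q)‖^2) := by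
    intro j
    rw [Phi_comp]
    exact hT.comp_injective (Phi_inj j)
  have hle : ∀ j : Fin (n+1), ∑' k, ∑' l, nsq l * ‖ψ (Phi j (k, l))‖^2 ≤ T := by
    intro j
    rw [← (hsum j).tsum_prod, Phi_comp]
    exact tsum_comp_le_tsum_of_inj hT
      (fun K => mul_nonneg (nsq_nonneg _) (sq_nonneg _)) (Phi_inj j)
  have hterm := Aminus_term d w C0 ε (H ε h0 h1) n ψ hsum
  have hS : Summable (fun k : Fin (n+1) → ZLat d => ‖c‖^2 * ((n:ℝ)+2)^2 *
        (2 * (∑ i, w i ^2)) * C0 * ∑ j, ∑' l, nsq l * ‖ψ (Phi j (k, l))‖^2) :=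
    (summable_sum fun j _ => (hsum j).prod).mul_left _
  have hnn : ∀ k, 0 ≤ sobTerm (-(1/2) : ℝ) (Aminus d w ε ψ) k := by
    intro k
    rw [sob_neg_half]
    have := wSq_nonneg k
    positivity
  have hA := Summable.of_nonneg_of_le hnn hterm hS
  refine ⟨hA, ?_⟩
  have hbound : ∑' k, sobTerm (-(1/2) : ℝ) (Aminus d w ε ψ) k ≤
      B * ((n:ℝ)+2) * ((n:ℝ)+1) * Q := by
    calc _ ≤ ‖c‖^2 * ((n:ℝ)+2)^2 * (2 * (∑ i, w i ^2)) * C0 *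
          ∑ j : Fin (n+1), ∑' k, ∑' l, nsq l * ‖ψ (Phi j (k, l))‖^2 := by
          rw [← Summable.tsum_finsetSum (fun j _ => (hsum j).prod), ← tsum_mul_left]
          exact hA.tsum_le_tsum hterm hS
      _ ≤ ‖c‖^2 * ((n:ℝ)+2)^2 * (2 * (∑ i, w i ^2)) * C0 * ∑ j : Fin (n+1), T := by
          gcongr with j _
          exact hle j
      _ = ‖c‖^2 * ((n:ℝ)+2) * (2 * (∑ i, w i ^2)) * C0 * ((n:ℝ)+1) * (((n:ℝ)+2) * T) := by
          rw [Finset.sum_const, Finset.card_univ, Fintype.card_fin, nsmul_eq_mul]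
          push_cast; ring
      _ = _ := by rw [hTs, hB]; ring
  have hQ0 : 0 ≤ Q := tsum_nonneg fun K => by
    rw [sob_half]
    have := wSq_nonneg K
    positivity
  have hfin : sobSq (-(1/2) : ℝ) (Aminus d w ε ψ) ≤ B * ((n:ℝ)+2) * sobSq (1/2 : ℝ) ψ := by
    unfold sobSq
    rw [← hQ, Nat.factorial_succ (n+1)]
    have hf : (0:ℝ) ≤ ((n+1).factorial : ℝ) := Nat.cast_nonneg _
    calc _ ≤ ((n+1).factorial : ℝ) * (B * ((n:ℝ)+2) * ((n:ℝ)+1) * Q) := by gcongr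
      _ ≤ ((n+1).factorial : ℝ) * (B * ((n:ℝ)+2) * ((n:ℝ)+2) * Q) := by gcongr; norm_num
      _ = _ := by push_cast; ring
  calc _ ≤ Real.sqrt (B * ((n:ℝ)+2) * sobSq (1/2 : ℝ) ψ) := Real.sqrt_le_sqrt hfin
    _ = Real.sqrt B * Real.sqrt ((n:ℝ)+2) * Real.sqrt (sobSq (1/2 : ℝ) ψ) := by
        rw [Real.sqrt_mul (by positivity), Real.sqrt_mul hB0]
    _ ≤ _ := by gcongr; linarith

end SBE
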